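/- Let w ∈ W^J. For v, v' ∈ W_{I(J,w,δ)}, the elements w v and w v' lie in the same orbit of the δ-twisted partial conjugation action of W_J on W if and only if v' = (w⁻¹ δ(u) w) v u⁻¹ for some u ∈ W_{I(J,w,δ)} (i.e. v and v' are Ad(w)⁻¹∘δ-twisted conjugate in W_{I(J,w,δ)}); moreover every W_J-orbit contained in W_J ·_δ (w W_{I(J,w,δ)}) contains w v for some v ∈ W_{I(J,w,δ)}. Hence v ↦ W_J ·_δ {w v} induces a bijection from the set of Ad(w)⁻¹∘δ-twisted conjugacy classes of W_{I(J,w,δ)} onto the set of W_J-orbits contained in W_J ·_δ (w W_{I(J,w,δ)}). -/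

import Mathlib

open CoxeterSystem

variable {B : Type*} [Finite B] {W : Type*} [Group W] {M : CoxeterMatrix B}

namespace PartialConjugation

/-- The standard parabolic subgroup `W_J` of `W`, generated by the simple
reflections indexed by `J`. -/
def parab (cs : CoxeterSystem M W) (J : Set B) : Subgroup W :=
  Subgroup.closure (cs.simple '' J)

/-- The simple reflection `s_j` (for `j ∈ J`), viewed as an element of `W_J`. -/
def sJ (cs : CoxeterSystem M W) (J : Set B) (j : B) (hj : j ∈ J) : parab cs J :=
  ⟨cs.simple j, Subgroup.subset_closure ⟨j, hj, rfl⟩⟩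

/-- `w ∈ W^J`: `w` is a minimal length representative of its left coset `w W_J`. -/
def IsMinRep (cs : CoxeterSystem M W) (J : Set B) (w : W) : Prop :=
  ∀ v ∈ parab cs J, cs.length w ≤ cs.length (w * v)

variable (cs : CoxeterSystem M W) (J J' : Set B) (δ : parab cs J ≃* parab cs J')

/-- `δ` carries the set of simple reflections indexed by `J` onto the set of
simple reflections indexed by `J'`. -/
def MapsSimples : Prop :=
  (∀ j, ∀ hj : j ∈ J, ∃ j' ∈ J', (δ (sJ cs J j hj) : W) = cs.simple j') ∧
  (∀ j' ∈ J', ∃ j, ∃ hj : j ∈ J, (δ (sJ cs J j hj) : W) = cs.simple j')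

/-- `K` is a `w`-special subset of `J`. -/
def WSpecial (w : W) (K : Set B) : Prop :=
  K ⊆ J ∧ ∀ k ∈ K, ∃ j, ∃ hjJ : j ∈ J, j ∈ K ∧
    w * cs.simple k * w⁻¹ = (δ (sJ cs J j hjJ) : W)

/-- The set `I(J, w, δ)`: the union of all `w`-special subsets of `J`. -/
def Iset (w : W) : Set B := ⋃₀ {K | WSpecial cs J J' δ w K}

/-- The set `W_J ·_δ V = {δ(u) v u⁻¹ : u ∈ W_J, v ∈ V}`. -/
def orbSet (V : Set W) : Set W :=
  {x | ∃ u : parab cs J, ∃ v ∈ V, x = (δ u : W) * v * (u : W)⁻¹}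

/-- The orbit of `x` under the `δ`-twisted partial conjugation action of `W_J`. -/
def orbitOf (x : W) : Set W := orbSet cs J J' δ {x}

/-- The coset `w W_{I(J,w,δ)}`. -/
def coset (w : W) : Set W :=
  {x | ∃ v ∈ parab cs (Iset cs J J' δ w), x = w * v}

/-- Elementary step `v →_i v'` of `δ`-twisted conjugation: `v' = δ(s_i) v s_i`
with `i ∈ J` and `ℓ(v') ≤ ℓ(v)`. -/
def StepRel (v v' : W) : Prop :=
  ∃ i, ∃ hi : i ∈ J, v' = (δ (sJ cs J i hi) : W) * v * cs.simple i ∧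
    cs.length v' ≤ cs.length v

/-- The relation `v →_{J,δ} v'`. -/
def ToRel : W → W → Prop := Relation.ReflTransGen (StepRel cs J J' δ)

/-- The relation `v ≈_{J,δ} v'`. -/
def Approx (v v' : W) : Prop := ToRel cs J J' δ v v' ∧ ToRel cs J J' δ v' v

/-- The Bruhat order on `W`. -/
def bruhatLE (cs : CoxeterSystem M W) : W → W → Prop :=
  Relation.ReflTransGen
    (fun a b => ∃ t, cs.IsReflection t ∧ b = a * t ∧ cs.length a < cs.length b)

/-- The set of minimal length elements in the orbit of `x`. -/
def orbMin (x : W) : Set W :=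
  {y ∈ orbitOf cs J J' δ x | ∀ z ∈ orbitOf cs J J' δ x, cs.length y ≤ cs.length z}


/-- `v` and `v'` are `Ad(w)⁻¹ ∘ δ`-twisted conjugate in `W_{I(J,w,δ)}`:
`v' = (w⁻¹ δ(u) w) v u⁻¹` for some `u ∈ W_{I(J,w,δ)}`. -/
def TwConj (w v v' : W) : Prop :=
  ∃ u : W, ∃ huI : u ∈ parab cs (Iset cs J J' δ w), ∃ huJ : u ∈ parab cs J,
    v' = (w⁻¹ * (δ ⟨u, huJ⟩ : W) * w) * v * u⁻¹

section Exchange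

open scoped Classical in
/-- The generator of the action on `W × ℤ/2` used to prove the exchange condition. -/
noncomputable def refl0 (cs : CoxeterSystem M W) (i : B) : W × ZMod 2 → W × ZMod 2 :=
  fun p => (cs.simple i * p.1 * cs.simple i, p.2 + if p.1 = cs.simple i then 1 else 0)

theorem refl0_invol (cs : CoxeterSystem M W) (i : B) (p : W × ZMod 2) :
    refl0 cs i (refl0 cs i p) = p := by
  classical
  obtain ⟨t, e⟩ := p
  have h : cs.simple i * t * cs.simple i = cs.simple i ↔ t = cs.simple i := by
    constructor
    · intro h
      have h2 := congrArg (fun x => cs.simple i * x * cs.simple i) h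
      simpa [mul_assoc] using h2
    · rintro rfl; simp
  simp only [refl0, h]
  refine Prod.ext ?_ ?_
  · simp [mul_assoc]
  · simp only
    rw [add_assoc, CharTwo.add_self_eq_zero, add_zero]

/-- `refl0` as a permutation. -/
noncomputable def reflP (cs : CoxeterSystem M W) (i : B) : Equiv.Perm (W × ZMod 2) :=
  ⟨refl0 cs i, refl0 cs i, refl0_invol cs i, refl0_invol cs i⟩

theorem rot_aux (cs : CoxeterSystem M W) (i j : B) (k : ℕ) :
    (cs.simple i * cs.simple j) ^ k * cs.simple j * (cs.simple i * cs.simple j) ^ k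
      = cs.simple j := by
  induction k with
  | zero => simp
  | succ k ih =>
    rw [pow_succ]
    nth_rw 2 [← pow_succ]
    rw [pow_succ']
    calc _ = (cs.simple i * cs.simple j) ^ k *
        (cs.simple i * cs.simple j * cs.simple j * cs.simple i * cs.simple j) *
          (cs.simple i * cs.simple j) ^ k := by simp only [mul_assoc]
      _ = _ := by simpa using ih

open scoped Classical in
theorem reflP_pow (cs : CoxeterSystem M W) (i j : B) (k : ℕ) (t : W) (e : ZMod 2) :
    ((reflP cs i * reflP cs j) ^ k) (t, e) =
      ((cs.simple i * cs.simple j) ^ k * t * ((cs.simple i * cs.simple j) ^ k)⁻¹,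
        e + ∑ n ∈ Finset.range (2 * k),
          if t = cs.simple j * (cs.simple i * cs.simple j) ^ n then 1 else 0) := by
  induction k with
  | zero => simp
  | succ k ih =>
    set r := cs.simple i * cs.simple j with hr
    have hrot : r ^ k * cs.simple j * r ^ k = cs.simple j := rot_aux cs i j k
    have hc : (r ^ k)⁻¹ * cs.simple j = cs.simple j * r ^ k := by
      rw [inv_mul_eq_iff_eq_mul, ← mul_assoc, hrot]
    have h1 : r ^ k * t * (r ^ k)⁻¹ = cs.simple j ↔ t = cs.simple j * r ^ (2 * k) := by
      rw [mul_inv_eq_iff_eq_mul, ← eq_inv_mul_iff_mul_eq, ← mul_assoc, hc, two_mul, pow_add,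
        mul_assoc]
    have h2 : cs.simple j * (r ^ k * t * (r ^ k)⁻¹) * cs.simple j = cs.simple i ↔
        t = cs.simple j * r ^ (2 * k + 1) := by
      have : cs.simple j * (r ^ k * t * (r ^ k)⁻¹) * cs.simple j = cs.simple i ↔
          r ^ k * t * (r ^ k)⁻¹ = cs.simple j * r := by
        constructor
        · intro h
          have h3 := congrArg (fun x => cs.simple j * x * cs.simple j) h
          simpa [mul_assoc, hr] using h3
        · intro h
          rw [h]; simp [hr, mul_assoc]
      rw [this, mul_inv_eq_iff_eq_mul, ← eq_inv_mul_iff_mul_eq, ← mul_assoc, ← mul_assoc, hc]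
      have : cs.simple j * r ^ k * r * r ^ k = cs.simple j * r ^ (2 * k + 1) := by
        rw [mul_assoc, mul_assoc, ← pow_succ', ← pow_add]
        congr 2; omega
      rw [this]
    rw [pow_succ', Equiv.Perm.mul_apply, ih, Equiv.Perm.mul_apply]
    show refl0 cs i (refl0 cs j _) = _
    simp only [refl0, h1, h2]
    refine Prod.ext ?_ ?_
    · simp [pow_succ', hr, mul_assoc]
    · simp only
      rw [show 2 * (k + 1) = 2 * k + 1 + 1 by ring, Finset.sum_range_succ, Finset.sum_range_succ]
      simp only [add_assoc]

theorem reflP_liftable (cs : CoxeterSystem M W) : M.IsLiftable (reflP cs) := by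
  classical
  intro i j
  refine Equiv.ext ?_
  rintro ⟨t, e⟩
  rw [reflP_pow, two_mul, Finset.sum_range_add]
  have h : (cs.simple i * cs.simple j) ^ M i j = 1 := cs.simple_mul_simple_pow i j
  simp only [pow_add, h, one_mul, CharTwo.add_self_eq_zero]
  simp

/-- The action of `W` on `W × ℤ/2`. -/
noncomputable def act (cs : CoxeterSystem M W) : W →* Equiv.Perm (W × ZMod 2) :=
  cs.lift ⟨reflP cs, reflP_liftable cs⟩

theorem act_simple (cs : CoxeterSystem M W) (i : B) (p : W × ZMod 2) :
    act cs (cs.simple i) p = refl0 cs i p := by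
  rw [act, cs.lift_apply_simple]; rfl

theorem act_of_notMem (cs : CoxeterSystem M W) (ω : List B) (t : W) (e : ZMod 2)
    (h : t ∉ cs.rightInvSeq ω) :
    act cs (cs.wordProd ω) (t, e) = (cs.wordProd ω * t * (cs.wordProd ω)⁻¹, e) := by
  induction ω with
  | nil => simp
  | cons i ω ih =>
    rw [rightInvSeq, List.mem_cons, not_or] at h
    rw [cs.wordProd_cons, map_mul, Equiv.Perm.mul_apply, ih h.2, act_simple, refl0]
    have : ¬ (cs.wordProd ω * t * (cs.wordProd ω)⁻¹ = cs.simple i) := by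
      intro h'
      apply h.1
      rw [← h']; simp [mul_assoc]
    simpa [mul_assoc] using this

/-- The exchange condition. -/
theorem exchange (cs : CoxeterSystem M W) (ω : List B) (i : B)
    (h : cs.length (cs.wordProd ω * cs.simple i) < cs.length (cs.wordProd ω)) :
    ∃ k < ω.length, cs.wordProd ω * cs.simple i = cs.wordProd (ω.eraseIdx k) := by
  by_cases hm : cs.simple i ∈ cs.rightInvSeq ω
  · obtain ⟨k, hk, hk'⟩ := List.mem_iff_getElem.mp hm
    refine ⟨k, by simpa using hk, ?_⟩
    rw [← cs.wordProd_mul_getD_rightInvSeq, ← hk', List.getD_eq_getElem]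
  · exfalso
    obtain ⟨ν, hν, hν'⟩ := cs.exists_isReduced (cs.wordProd ω * cs.simple i)
    have hn : cs.simple i ∉ cs.rightInvSeq ν := by
      intro hm'
      have := (cs.isRightInversion_of_mem_rightInvSeq hν hm').2
      rw [← hν', cs.simple_mul_simple_cancel_right] at this
      omega
    have h1 := act_of_notMem cs ω (cs.simple i) 1 hm
    have h2 := act_of_notMem cs ν (cs.simple i) 0 hn
    rw [← hν', map_mul, Equiv.Perm.mul_apply, act_simple, refl0] at h2
    simp at h2
    rw [h1] at h2
    simp at h2

end Exchange

section Parabolic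

theorem simple_mem (cs : CoxeterSystem M W) {J : Set B} {j : B} (hj : j ∈ J) :
    cs.simple j ∈ parab cs J := Subgroup.subset_closure ⟨j, hj, rfl⟩

theorem parab_mono (cs : CoxeterSystem M W) {J K : Set B} (h : K ⊆ J) :
    parab cs K ≤ parab cs J := Subgroup.closure_mono (Set.image_mono h)

theorem wordProd_mem (cs : CoxeterSystem M W) {J : Set B} (ω : List B) (h : ∀ i ∈ ω, i ∈ J) :
    cs.wordProd ω ∈ parab cs J := by
  induction ω with
  | nil => simpa using (parab cs J).one_mem
  | cons i ω ih =>
    rw [cs.wordProd_cons]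
    exact mul_mem (simple_mem cs (h i (by simp))) (ih fun k hk => h k (by simp [hk]))

theorem exists_reduced_aux (cs : CoxeterSystem M W) {J : Set B} (v : W) (j : B) (hj : j ∈ J)
    (h : ∃ ω : List B, (∀ i ∈ ω, i ∈ J) ∧ cs.IsReduced ω ∧ v = cs.wordProd ω) :
    ∃ ω : List B, (∀ i ∈ ω, i ∈ J) ∧ cs.IsReduced ω ∧ v * cs.simple j = cs.wordProd ω := by
  obtain ⟨ω, h1, h2, rfl⟩ := h
  rcases cs.length_mul_simple (cs.wordProd ω) j with h | h
  · refine ⟨ω ++ [j], ?_, ?_, ?_⟩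
    · intro i hi
      simp at hi
      rcases hi with hi | rfl
      exacts [h1 i hi, hj]
    · rw [CoxeterSystem.IsReduced, cs.wordProd_append, cs.wordProd_singleton, h, h2.eq]; simp
    · rw [cs.wordProd_append, cs.wordProd_singleton]
  · obtain ⟨k, hk, hk'⟩ := exchange cs ω j (by omega)
    refine ⟨ω.eraseIdx k, fun i hi => h1 i (List.mem_of_mem_eraseIdx hi), ?_, hk'⟩
    rw [CoxeterSystem.IsReduced, ← hk', List.length_eraseIdx_of_lt hk, ← h2.eq]
    omega

theorem exists_reduced (cs : CoxeterSystem M W) {J : Set B} (v : W) (hv : v ∈ parab cs J) :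
    ∃ ω : List B, (∀ i ∈ ω, i ∈ J) ∧ cs.IsReduced ω ∧ v = cs.wordProd ω := by
  induction hv using Subgroup.closure_induction_right with
  | one => exact ⟨[], by simp, by simp [CoxeterSystem.IsReduced], by simp⟩
  | mul_right x hx y hy ih =>
    obtain ⟨j, hj, rfl⟩ := hy
    exact exists_reduced_aux cs x j hj ih
  | mul_inv_cancel x hx y hy ih =>
    obtain ⟨j, hj, rfl⟩ := hy
    rw [cs.inv_simple]
    exact exists_reduced_aux cs x j hj ih

theorem eraseIdx_append_cases (cs : CoxeterSystem M W) (α β : List B) (k : ℕ)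
    (hk : k < (α ++ β).length) :
    (k < α.length ∧ cs.wordProd ((α ++ β).eraseIdx k)
        = cs.wordProd (α.eraseIdx k) * cs.wordProd β) ∨
    (∃ l < β.length, cs.wordProd ((α ++ β).eraseIdx k)
        = cs.wordProd α * cs.wordProd (β.eraseIdx l)) := by
  rcases lt_or_ge k α.length with h | h
  · left
    exact ⟨h, by rw [List.eraseIdx_append_of_lt_length h, cs.wordProd_append]⟩
  · right
    refine ⟨k - α.length, by simp at hk; omega, ?_⟩
    rw [List.eraseIdx_append_of_length_le h, cs.wordProd_append]

theorem length_erase_lt (cs : CoxeterSystem M W) (α : List B) (hα : cs.IsReduced α) (k : ℕ)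
    (hk : k < α.length) : cs.length (cs.wordProd (α.eraseIdx k)) < cs.length (cs.wordProd α) := by
  have := cs.length_wordProd_le (α.eraseIdx k)
  rw [List.length_eraseIdx_of_lt hk] at this
  rw [hα.eq]; omega

/-- Length additivity for minimal coset representatives. -/
theorem length_add_word (cs : CoxeterSystem M W) {J : Set B} {w : W} (hw : IsMinRep cs J w)
    (ν : List B) (hJ : ∀ i ∈ ν, i ∈ J) (hr : cs.IsReduced ν) :
    cs.length (w * cs.wordProd ν) = cs.length w + ν.length := by
  induction ν using List.reverseRecOn with
  | nil => simp
  | append_singleton ν i ih =>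
    have hr' : cs.IsReduced ν := by
      have := hr.take ν.length
      simpa using this
    have hJ' : ∀ k ∈ ν, k ∈ J := fun k hk => hJ k (by simp [hk])
    have ih := ih hJ' hr'
    have hi : i ∈ J := hJ i (by simp)
    have hlen := hr.eq
    rw [cs.wordProd_append, cs.wordProd_singleton, ← mul_assoc]
    rw [cs.wordProd_append, cs.wordProd_singleton, List.length_append, List.length_singleton] at hlen
    rcases cs.length_mul_simple (w * cs.wordProd ν) i with h | h
    · rw [h, ih]; simp [add_assoc]
    · exfalso
      obtain ⟨ω, hω, hωw⟩ := cs.exists_isReduced w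
      have hE : cs.wordProd (ω ++ ν) = w * cs.wordProd ν := by rw [cs.wordProd_append, hωw]
      obtain ⟨k, hk, hk'⟩ := exchange cs (ω ++ ν) i (by rw [hE]; omega)
      rw [hE] at hk'
      rcases eraseIdx_append_cases cs ω ν k hk with ⟨hl, he⟩ | ⟨l, hl, he⟩
      · have h1 := length_erase_lt cs ω hω k hl
        have h2 := hw (cs.wordProd ν * cs.simple i * (cs.wordProd ν)⁻¹)
          (mul_mem (mul_mem (wordProd_mem cs ν hJ') (simple_mem cs hi))
            (inv_mem (wordProd_mem cs ν hJ')))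
        rw [he] at hk'
        have h3 : w * (cs.wordProd ν * cs.simple i * (cs.wordProd ν)⁻¹)
            = cs.wordProd (ω.eraseIdx k) := by
          rw [← mul_assoc, ← mul_assoc, hk', mul_inv_cancel_right]
        rw [h3] at h2
        rw [← hωw] at h1
        omega
      · have h1 := length_erase_lt cs ν hr' l hl
        rw [he, ← hωw, mul_assoc, mul_right_inj] at hk'
        rw [← hk', hlen, hr'.eq] at h1
        omega

theorem length_add (cs : CoxeterSystem M W) {J : Set B} {w : W} (hw : IsMinRep cs J w)
    {v : W} (hv : v ∈ parab cs J) : cs.length (w * v) = cs.length w + cs.length v := by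
  obtain ⟨ν, h1, h2, rfl⟩ := exists_reduced cs v hv
  rw [length_add_word cs hw ν h1 h2, h2.eq]

theorem length_add' (cs : CoxeterSystem M W) {L : Set B} {w : W} (hw : IsMinRep cs L w⁻¹)
    {z : W} (hz : z ∈ parab cs L) : cs.length (z * w) = cs.length w + cs.length z := by
  have := length_add cs hw (inv_mem hz)
  rwa [← mul_inv_rev, cs.length_inv, cs.length_inv, cs.length_inv] at this

theorem simple_of_conj (cs : CoxeterSystem M W) {L : Set B} {w : W} (hw : IsMinRep cs L w⁻¹)
    {t : W} (ht : t ∈ parab cs L) (i : B) (h : w * cs.simple i = t * w) :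
    ∃ l ∈ L, t = cs.simple l := by
  obtain ⟨ζ, h1, h2, rfl⟩ := exists_reduced cs t ht
  have h3 := length_add' cs hw ht
  have h4 := cs.length_mul_le w (cs.simple i)
  rw [cs.length_simple] at h4
  have h5 := cs.length_mul_simple_ne w i
  rw [h] at h4 h5
  have h6 : ζ.length = 1 := by rw [← h2.eq]; omega
  obtain ⟨l, rfl⟩ := List.length_eq_one_iff.mp h6
  exact ⟨l, h1 l (by simp), by simp⟩

/-- The intersection of a parabolic with a conjugate. -/
theorem kilmoyer (cs : CoxeterSystem M W) {K L : Set B} {w : W} (hw : IsMinRep cs K w)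
    (hw' : IsMinRep cs L w⁻¹) (n : ℕ) (y z : W) (hn : cs.length y = n) (hy : y ∈ parab cs K)
    (hz : z ∈ parab cs L) (h : w * y = z * w) :
    y ∈ parab cs {k | k ∈ K ∧ ∃ l ∈ L, w * cs.simple k * w⁻¹ = cs.simple l} := by
  induction n generalizing y z with
  | zero =>
    rw [cs.length_eq_zero_iff] at hn
    rw [hn]; exact one_mem _
  | succ n ih =>
    obtain ⟨ν, h1, h2, rfl⟩ := exists_reduced cs y hy
    rcases List.eq_nil_or_concat ν with rfl | ⟨ν, i, rfl⟩
    · simp at hn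
    rw [List.concat_eq_append] at *
    have hiK : i ∈ K := h1 i (by simp)
    have hr' : cs.IsReduced ν := by
      have := h2.take ν.length
      simpa using this
    have hy' : cs.wordProd ν ∈ parab cs K := wordProd_mem cs ν fun k hk => h1 k (by simp [hk])
    have hlen := h2.eq
    rw [List.length_append, List.length_singleton, hn] at hlen
    rw [cs.wordProd_append, cs.wordProd_singleton] at *
    have ha := length_add cs hw hy'
    have hb := length_add cs hw hy
    have hc : z * w * cs.simple i = w * cs.wordProd ν := by
      rw [← h]; simp [mul_assoc]
    obtain ⟨ζ, hζ1, hζ2, rfl⟩ := exists_reduced cs z hz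
    obtain ⟨ω, hω, hωw⟩ := cs.exists_isReduced w
    have hE : cs.wordProd (ζ ++ ω) = cs.wordProd ζ * w := by rw [cs.wordProd_append, hωw]
    obtain ⟨k, hk, hk'⟩ := exchange cs (ζ ++ ω) i (by
      rw [hE, hc, ← h, ha, hb, hn, hr'.eq]; omega)
    rw [hE] at hk'
    rcases eraseIdx_append_cases cs ζ ω k hk with ⟨hl, he⟩ | ⟨l, hl, he⟩
    · rw [he, ← hωw] at hk'
      have hz' : cs.wordProd (ζ.eraseIdx k) ∈ parab cs L :=
        wordProd_mem cs _ fun i hi => hζ1 i (List.mem_of_mem_eraseIdx hi)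
      have ht := mul_mem (inv_mem hz) hz'
      have hconj : w * cs.simple i = (cs.wordProd ζ)⁻¹ * cs.wordProd (ζ.eraseIdx k) * w := by
        rw [mul_assoc, ← hk']; simp [mul_assoc]
      obtain ⟨l, hlL, hl'⟩ := simple_of_conj cs hw' ht i hconj
      refine mul_mem (ih _ _ ?_ hy' hz' ?_) (simple_mem cs ⟨hiK, l, hlL, ?_⟩)
      · rw [hr'.eq]; omega
      · rw [← hc, hk']
      · rw [hconj, hl']; simp
    · exfalso
      have h1 := length_erase_lt cs ω hω l hl
      rw [he, mul_assoc, mul_right_inj] at hk'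
      rw [← hk', ← hωw] at h1
      have := hw _ (simple_mem cs hiK)
      omega

theorem exists_minRep (cs : CoxeterSystem M W) {K L : Set B} {w : W} (hw : IsMinRep cs K w) :
    ∃ x ∈ parab cs L, ∃ w0, w = x * w0 ∧ IsMinRep cs L w0⁻¹ ∧ IsMinRep cs K w0 := by
  have hne : {n | ∃ x ∈ parab cs L, cs.length (x * w) = n}.Nonempty :=
    ⟨_, 1, one_mem _, rfl⟩
  obtain ⟨x, hx, hxn⟩ := Nat.sInf_mem hne
  have hmin : ∀ y ∈ parab cs L, cs.length (x * w) ≤ cs.length (y * w) := by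
    intro y hy
    rw [hxn]
    exact Nat.sInf_le ⟨y, hy, rfl⟩
  have hL : IsMinRep cs L (x * w)⁻¹ := by
    intro v hv
    have := hmin (v⁻¹ * x) (mul_mem (inv_mem hv) hx)
    rwa [cs.length_inv, ← cs.length_inv ((x * w)⁻¹ * v), mul_inv_rev, inv_inv, ← mul_assoc]
  refine ⟨x⁻¹, inv_mem hx, x * w, by simp, hL, ?_⟩
  intro v hv
  have h1 := hw v hv
  have h2 := length_add' cs hL (inv_mem hx)
  have h3 := cs.length_mul_le x⁻¹ (x * w * v)
  rw [mul_assoc x, inv_mul_cancel_left] at h3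
  rw [inv_mul_cancel_left] at h2
  rw [mul_assoc x]
  omega

end Parabolic

section Main

/-- The image of `K` under `δ`. -/
def imgSet (cs : CoxeterSystem M W) (J J' : Set B) (δ : parab cs J ≃* parab cs J')
    (K : Set B) : Set B :=
  {b | ∃ k ∈ K, ∃ hk : k ∈ J, (δ (sJ cs J k hk) : W) = cs.simple b}

theorem delta_mem (cs : CoxeterSystem M W) (J J' : Set B) (δ : parab cs J ≃* parab cs J')
    (hδ : MapsSimples cs J J' δ) (K : Set B) (hK : K ⊆ J) (u : W) (hu : u ∈ parab cs K) :
    ∀ huJ : u ∈ parab cs J, (δ ⟨u, huJ⟩ : W) ∈ parab cs (imgSet cs J J' δ K) := by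
  have hle := parab_mono cs hK
  have : parab cs K ≤ ((parab cs (imgSet cs J J' δ K)).comap
      ((parab cs J').subtype.comp δ.toMonoidHom)).map (parab cs J).subtype := by
    refine (Subgroup.closure_le _).2 ?_
    rintro _ ⟨k, hk, rfl⟩
    refine ⟨sJ cs J k (hK hk), ?_, rfl⟩
    obtain ⟨j', hj', h⟩ := hδ.1 k (hK hk)
    show (δ (sJ cs J k (hK hk)) : W) ∈ parab cs (imgSet cs J J' δ K)
    rw [h]
    exact simple_mem cs ⟨k, hk, hK hk, h⟩
  intro huJ
  obtain ⟨⟨y, hy⟩, h1, h2⟩ := this hu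
  obtain rfl : y = u := h2
  exact h1

theorem special_Iset (cs : CoxeterSystem M W) (J J' : Set B) (δ : parab cs J ≃* parab cs J')
    (w : W) : WSpecial cs J J' δ w (Iset cs J J' δ w) := by
  constructor
  · exact Set.sUnion_subset fun K hK => hK.1
  · rintro k ⟨K, hK, hk⟩
    obtain ⟨j, hj, hjK, h⟩ := hK.2 k hk
    exact ⟨j, hj, ⟨K, hK, hjK⟩, h⟩

/-- A fixed point of the refinement process is special. -/
theorem special_of_stable (cs : CoxeterSystem M W) (J J' : Set B)
    (δ : parab cs J ≃* parab cs J') (K : Set B) (hK : K ⊆ J) (w x w0 : W)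
    (hw : IsMinRep cs K w) (hx : x ∈ parab cs (imgSet cs J J' δ K)) (hwx : w = x * w0)
    (hw0 : IsMinRep cs K w0)
    (hst : ∀ k ∈ K, ∃ l ∈ imgSet cs J J' δ K, w0 * cs.simple k * w0⁻¹ = cs.simple l) :
    WSpecial cs J J' δ w K := by
  have hf : ∀ a : (cs.simple '' K), ∃ b : (cs.simple '' K), ∃ hb : (b : W) ∈ parab cs J,
      w0 * (a : W) * w0⁻¹ = (δ ⟨b, hb⟩ : W) := by
    rintro ⟨_, k, hk, rfl⟩
    obtain ⟨l, ⟨j, hj, hjJ, hl⟩, h⟩ := hst k hk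
    exact ⟨⟨cs.simple j, j, hj, rfl⟩, simple_mem cs hjJ, by rw [h, ← hl]; rfl⟩
  choose f hfJ hf using hf
  have hinj : Function.Injective f := by
    intro a b hab
    have h1 := hf a
    have h2 := hf b
    have h3 : (⟨(f a : W), hfJ a⟩ : parab cs J) = ⟨(f b : W), hfJ b⟩ := by
      apply Subtype.ext; simp [hab]
    rw [h3, ← h2] at h1
    apply Subtype.ext
    simpa using h1
  have hsurj := Finite.surjective_of_injective hinj
  have hle : parab cs (imgSet cs J J' δ K) ≤
      (parab cs K).comap (MulAut.conj w0⁻¹).toMonoidHom := by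
    refine (Subgroup.closure_le _).2 ?_
    rintro _ ⟨l, ⟨j, hj, hjJ, hl⟩, rfl⟩
    obtain ⟨a, ha⟩ := hsurj ⟨cs.simple j, j, hj, rfl⟩
    have h1 := hf a
    have h2 : (⟨(f a : W), hfJ a⟩ : parab cs J) = sJ cs J j hjJ := by
      apply Subtype.ext; simp [ha, sJ]
    rw [h2, hl] at h1
    show w0⁻¹ * cs.simple l * w0⁻¹⁻¹ ∈ parab cs K
    rw [← h1]
    obtain ⟨k, hk, hk'⟩ := a.2
    have : w0⁻¹ * (w0 * (a : W) * w0⁻¹) * w0⁻¹⁻¹ = cs.simple k := by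
      rw [hk']; simp [mul_assoc]
    rw [this]
    exact simple_mem cs hk
  have hy : w0⁻¹ * x * w0⁻¹⁻¹ ∈ parab cs K := hle hx
  rw [inv_inv] at hy
  have e1 : w = w0 * (w0⁻¹ * x * w0) := by rw [hwx]; simp [mul_assoc]
  have l1 := length_add cs hw0 hy
  have l2 := hw _ (inv_mem hy)
  rw [← e1] at l1
  have e2 : w * (w0⁻¹ * x * w0)⁻¹ = w0 := by rw [hwx]; simp [mul_assoc]
  rw [e2] at l2
  have l3 : w0⁻¹ * x * w0 = 1 := cs.length_eq_zero_iff.1 (by omega)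
  have e3 : w = w0 := by rw [e1, l3, mul_one]
  refine ⟨hK, fun k hk => ?_⟩
  obtain ⟨l, ⟨j, hj, hjJ, hl⟩, h⟩ := hst k hk
  exact ⟨j, hjJ, hj, by rw [e3, h, hl]⟩

theorem mem_Iset (cs : CoxeterSystem M W) (J J' : Set B) (δ : parab cs J ≃* parab cs J')
    (hδ : MapsSimples cs J J' δ) (w : W) (hw : IsMinRep cs J w) (v v' : W)
    (hv : v ∈ parab cs (Iset cs J J' δ w)) (hv' : v' ∈ parab cs (Iset cs J J' δ w))
    (u : W) (huJ : u ∈ parab cs J) (h : w * v' = (δ ⟨u, huJ⟩ : W) * (w * v) * u⁻¹) :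
    u ∈ parab cs (Iset cs J J' δ w) := by
  have hsp := special_Iset cs J J' δ w
  set I := Iset cs J J' δ w with hI
  have key : ∀ (n : ℕ) (K : Set B), K.ncard = n → I ⊆ K → K ⊆ J → u ∈ parab cs K →
      u ∈ parab cs I := by
    intro n
    induction n using Nat.strong_induction_on with
    | _ n ih =>
    intro K hn hIK hKJ huK
    have hwK : IsMinRep cs K w := fun v hv => hw v (parab_mono cs hKJ hv)
    obtain ⟨x, hx, w0, hwx, hL, hK0⟩ := exists_minRep cs (L := imgSet cs J J' δ K) hwK
    have hδu := delta_mem cs J J' δ hδ K hKJ u huK huJ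
    have hy : v' * u * v⁻¹ ∈ parab cs K :=
      mul_mem (mul_mem (parab_mono cs hIK hv') huK) (inv_mem (parab_mono cs hIK hv))
    have hz := mul_mem (mul_mem (inv_mem hx) hδu) hx
    have heq : w0 * (v' * u * v⁻¹) = x⁻¹ * (δ ⟨u, huJ⟩ : W) * x * w0 := by
      have : w * v' * u * v⁻¹ = (δ ⟨u, huJ⟩ : W) * w := by rw [h]; simp [mul_assoc]
      rw [hwx] at this
      have h2 := congrArg (fun y => x⁻¹ * y) this
      simpa [mul_assoc] using h2
    have hkil := kilmoyer cs hK0 hL _ _ _ rfl hy hz heq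
    set K1 := {k | k ∈ K ∧ ∃ l ∈ imgSet cs J J' δ K, w0 * cs.simple k * w0⁻¹ = cs.simple l}
      with hK1
    have hIK1 : I ⊆ K1 := by
      intro k hk
      refine ⟨hIK hk, ?_⟩
      obtain ⟨j, hjJ, hjI, hj⟩ := hsp.2 k hk
      have hm := delta_mem cs J J' δ hδ K hKJ (cs.simple j) (simple_mem cs (hIK hjI))
        (simple_mem cs hjJ)
      have ht := mul_mem (mul_mem (inv_mem hx) hm) hx
      have hj' : w * cs.simple k * w⁻¹ = (δ ⟨cs.simple j, simple_mem cs hjJ⟩ : W) := hj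
      rw [← hj'] at ht
      have e : x⁻¹ * (w * cs.simple k * w⁻¹) * x = w0 * cs.simple k * w0⁻¹ := by
        rw [hwx]; simp [mul_assoc]
      rw [e] at ht
      exact simple_of_conj cs hL ht k (by simp)
    have hu1 : u ∈ parab cs K1 := by
      have := mul_mem (mul_mem (inv_mem (parab_mono cs hIK1 hv')) hkil) (parab_mono cs hIK1 hv)
      simpa [mul_assoc] using this
    have hsub : K1 ⊆ K := fun k hk => hk.1
    by_cases hEq : K1 = K
    · have hs : WSpecial cs J J' δ w K :=
        special_of_stable cs J J' δ K hKJ w x w0 hwK hx hwx hK0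
          (fun k hk => (hEq.symm ▸ hk : k ∈ K1).2)
      exact parab_mono cs (Set.subset_sUnion_of_mem hs) huK
    · have hlt : K1.ncard < K.ncard :=
        Set.ncard_lt_ncard (hsub.ssubset_of_ne hEq) (Set.toFinite K)
      exact ih _ (hn ▸ hlt) K1 rfl hIK1 (hsub.trans hKJ) hu1
  exact key _ J rfl hsp.1 le_rfl huJ

theorem mem_orbitOf (cs : CoxeterSystem M W) (J J' : Set B) (δ : parab cs J ≃* parab cs J')
    (x y : W) : y ∈ orbitOf cs J J' δ x ↔
      ∃ u : parab cs J, y = (δ u : W) * x * (u : W)⁻¹ := by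
  simp [orbitOf, orbSet]

theorem orbitOf_self (cs : CoxeterSystem M W) (J J' : Set B) (δ : parab cs J ≃* parab cs J')
    (x : W) : x ∈ orbitOf cs J J' δ x :=
  (mem_orbitOf cs J J' δ x x).2 ⟨1, by simp⟩

theorem orbitOf_symm (cs : CoxeterSystem M W) (J J' : Set B) (δ : parab cs J ≃* parab cs J')
    {x y : W} (h : y ∈ orbitOf cs J J' δ x) : x ∈ orbitOf cs J J' δ y := by
  rw [mem_orbitOf] at *
  obtain ⟨u, rfl⟩ := h
  exact ⟨u⁻¹, by simp [mul_assoc]⟩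

theorem orbitOf_trans (cs : CoxeterSystem M W) (J J' : Set B) (δ : parab cs J ≃* parab cs J')
    {x y z : W} (h : y ∈ orbitOf cs J J' δ x) (h' : z ∈ orbitOf cs J J' δ y) :
    z ∈ orbitOf cs J J' δ x := by
  rw [mem_orbitOf] at *
  obtain ⟨u, rfl⟩ := h
  obtain ⟨u', rfl⟩ := h'
  exact ⟨u' * u, by simp [mul_assoc]⟩

theorem orbitOf_eq_iff (cs : CoxeterSystem M W) (J J' : Set B) (δ : parab cs J ≃* parab cs J')
    (x y : W) : orbitOf cs J J' δ x = orbitOf cs J J' δ y ↔ y ∈ orbitOf cs J J' δ x := by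
  constructor
  · intro h; rw [h]; exact orbitOf_self cs J J' δ y
  · intro h
    ext z
    exact ⟨fun hz => orbitOf_trans cs J J' δ (orbitOf_symm cs J J' δ h) hz,
      fun hz => orbitOf_trans cs J J' δ h hz⟩

end Main

/-- For `w ∈ W^J`: `w v` and `w v'` lie in the same
`W_J`-orbit iff `v, v'` are `Ad(w)⁻¹ ∘ δ`-twisted conjugate in `W_{I(J,w,δ)}`;
every `W_J`-orbit contained in `W_J ·_δ (w W_{I(J,w,δ)})` contains some `w v`;
hence `v ↦ W_J ·_δ {w v}` induces a bijection from the twisted conjugacy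
classes of `W_{I(J,w,δ)}` onto the `W_J`-orbits in `W_J ·_δ (w W_{I(J,w,δ)})`. -/
theorem stmt2 (hδ : MapsSimples cs J J' δ) (w : W) (hw : IsMinRep cs J w) :
    (∀ v ∈ parab cs (Iset cs J J' δ w), ∀ v' ∈ parab cs (Iset cs J J' δ w),
      w * v' ∈ orbitOf cs J J' δ (w * v) ↔ TwConj cs J J' δ w v v') ∧
    (∀ x ∈ orbSet cs J J' δ (coset cs J J' δ w),
      ∃ v ∈ parab cs (Iset cs J J' δ w), w * v ∈ orbitOf cs J J' δ x) ∧
    (∀ v ∈ parab cs (Iset cs J J' δ w), ∀ v' ∈ parab cs (Iset cs J J' δ w),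
      orbitOf cs J J' δ (w * v) = orbitOf cs J J' δ (w * v') ↔
        TwConj cs J J' δ w v v') ∧
    (∀ x ∈ orbSet cs J J' δ (coset cs J J' δ w),
      ∃ v ∈ parab cs (Iset cs J J' δ w),
        orbitOf cs J J' δ x = orbitOf cs J J' δ (w * v)) := by
  have h1 : ∀ v ∈ parab cs (Iset cs J J' δ w), ∀ v' ∈ parab cs (Iset cs J J' δ w),
      (w * v' ∈ orbitOf cs J J' δ (w * v) ↔ TwConj cs J J' δ w v v') := by
    intro v hv v' hv'
    rw [mem_orbitOf]
    constructor
    · rintro ⟨⟨u, huJ⟩, hu⟩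
      refine ⟨u, mem_Iset cs J J' δ hδ w hw v v' hv hv' u huJ hu, huJ, ?_⟩
      have h2 := congrArg (fun y => w⁻¹ * y) hu
      simpa [mul_assoc] using h2
    · rintro ⟨u, huI, huJ, rfl⟩
      exact ⟨⟨u, huJ⟩, by simp [mul_assoc]⟩
  have h2 : ∀ x ∈ orbSet cs J J' δ (coset cs J J' δ w),
      ∃ v ∈ parab cs (Iset cs J J' δ w), w * v ∈ orbitOf cs J J' δ x := by
    rintro x ⟨u, _, ⟨v, hv, rfl⟩, hx⟩
    exact ⟨v, hv, orbitOf_symm cs J J' δ ((mem_orbitOf cs J J' δ _ _).2 ⟨u, hx⟩)⟩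
  refine ⟨h1, h2, ?_, ?_⟩
  · intro v hv v' hv'
    rw [orbitOf_eq_iff, h1 v hv v' hv']
  · intro x hx
    obtain ⟨v, hv, h⟩ := h2 x hx
    exact ⟨v, hv, (orbitOf_eq_iff cs J J' δ _ _).2 h⟩

end PartialConjugation
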